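/- Characterization of priority-queue transcripts without duplicates: Let U, N be positive integers and let w ∈ Σ^N with Σ = {ins(a), ext(a) : a ∈ {0,…,U}} be such that every value a ∈ {0,…,U} occurs at most once as an insertion ins(a) and at most once as an extraction ext(a), and w is balanced (a value is inserted in w if and only if it is extracted in w). Then w ∈ PQ(U) if and only if: (i) for every value a occurring in w, the position of ext(a) is strictly after the position of ins(a); and (ii) there do not exist positions i < t < j and values a > b with w[i] = ins(a), w[t] = ext(b), and w[j] = ext(a). -/

import Mathlib

/-!
Without duplicate insertions, the multiset `Mseq w n` is a set, and `a` belongs to it exactly when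
`ins a` occurs at some position `i ≤ n` and `ext a` occurs at no position in `(i, n]`
(`mem_Mseq_iff`). Both sides of the equivalence can then be read off positions. An extraction of `a`
is legal iff it comes after the insertion of `a`. An extraction of `b` at time `t` fails to extract
the maximum iff some `a > b` is present at time `t`. By balance such an `a` is extracted later, so
this is the pattern `ins a … ext b … ext a`.
-/

/-- A letter of the alphabet `Σ = {ins(a), ext(a)}`. -/
inductive Letter where
  | ins : ℕ → Letter
  | ext : ℕ → Letter
deriving DecidableEq

/-- The value carried by a letter. -/
def Letter.value : Letter → ℕ
  | .ins a => a
  | .ext a => a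

/-- One step of the multiset evolution. -/
def stepM (M : Multiset ℕ) : Letter → Multiset ℕ
  | .ins a => a ::ₘ M
  | .ext a => M.erase a

/-- The multiset `M_i` after processing the first `i` letters of `w` (1-indexed). -/
def Mseq (w : ℕ → Letter) : ℕ → Multiset ℕ
  | 0 => 0
  | i + 1 => stepM (Mseq w i) (w (i + 1))

/-- `w ∈ Collection`: the final multiset is empty and every extraction extracts a
currently present value. -/
def InCollection (N : ℕ) (w : ℕ → Letter) : Prop :=
  Mseq w N = 0 ∧ ∀ i, 1 ≤ i → i ≤ N → ∀ a, w i = .ext a → a ∈ Mseq w (i - 1)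

/-- `w ∈ PQ(U)`: values lie in `{0,…,U}`, `w ∈ Collection`, and each extracted value is
the maximum of the current multiset. -/
def InPQ (U N : ℕ) (w : ℕ → Letter) : Prop :=
  (∀ i, 1 ≤ i → i ≤ N → (w i).value ≤ U) ∧ InCollection N w ∧
    ∀ i, 1 ≤ i → i ≤ N → ∀ a, w i = .ext a → ∀ b ∈ Mseq w (i - 1), b ≤ a

theorem exists_ins_of_mem_Mseq {w : ℕ → Letter} {a n : ℕ} (h : a ∈ Mseq w n) :
    ∃ i, 1 ≤ i ∧ i ≤ n ∧ w i = .ins a := by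
  induction n with
  | zero => simp [Mseq] at h
  | succ n ih =>
    by_cases hn : a ∈ Mseq w n
    · obtain ⟨i, h1, h2, h3⟩ := ih hn
      exact ⟨i, h1, by omega, h3⟩
    · cases hw : w (n + 1) with
      | ins c =>
        simp only [Mseq, hw, stepM, Multiset.mem_cons, hn, or_false] at h
        exact ⟨n + 1, by omega, le_rfl, by rw [hw, h]⟩
      | ext c =>
        simp only [Mseq, hw, stepM] at h
        exact absurd (Multiset.mem_of_mem_erase h) hn

/-- An inserted value stays present as long as it is not extracted; this needs no assumption on
duplicates. -/
theorem mem_Mseq_of_ins {w : ℕ → Letter} {a i n : ℕ} (hi : 1 ≤ i) (hin : i ≤ n)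
    (hw : w i = .ins a) (hext : ∀ k, i < k → k ≤ n → w k ≠ .ext a) : a ∈ Mseq w n := by
  induction n, hin using Nat.le_induction with
  | base =>
    obtain ⟨m, rfl⟩ : ∃ m, i = m + 1 := ⟨i - 1, by omega⟩
    simp [Mseq, hw, stepM]
  | succ n hin ih =>
    have hmem := ih fun k h1 h2 => hext k h1 (by omega)
    cases hc : w (n + 1) with
    | ins c => simp [Mseq, hc, stepM, hmem]
    | ext c =>
      have hne : a ≠ c := fun h => hext (n + 1) (by omega) le_rfl (by rw [hc, h])
      simpa only [Mseq, hc, stepM, Multiset.mem_erase_of_ne hne] using hmem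

theorem nodup_Mseq {N : ℕ} {w : ℕ → Letter}
    (hdupIns : ∀ a i j, 1 ≤ i → i ≤ N → 1 ≤ j → j ≤ N →
      w i = .ins a → w j = .ins a → i = j)
    {n : ℕ} (hn : n ≤ N) : (Mseq w n).Nodup := by
  induction n with
  | zero => simp [Mseq]
  | succ n ih =>
    have hnd := ih (by omega)
    cases hw : w (n + 1) with
    | ins c =>
      simp only [Mseq, hw, stepM, Multiset.nodup_cons]
      refine ⟨fun hc => ?_, hnd⟩
      obtain ⟨i, h1, h2, h3⟩ := exists_ins_of_mem_Mseq hc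
      have := hdupIns c i (n + 1) h1 (by omega) (by omega) hn h3 hw
      omega
    | ext c =>
      simpa only [Mseq, hw, stepM] using hnd.erase c

/-- Multiplicity one is essential for the forward direction: only then does an extraction of `a`
remove `a` altogether. -/
theorem mem_Mseq_iff {N : ℕ} {w : ℕ → Letter}
    (hdupIns : ∀ a i j, 1 ≤ i → i ≤ N → 1 ≤ j → j ≤ N →
      w i = .ins a → w j = .ins a → i = j)
    {a n : ℕ} (hn : n ≤ N) :
    a ∈ Mseq w n ↔
      ∃ i, 1 ≤ i ∧ i ≤ n ∧ w i = .ins a ∧ ∀ k, i < k → k ≤ n → w k ≠ .ext a := by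
  refine ⟨fun h => ?_, fun ⟨i, h1, h2, h3, h4⟩ => mem_Mseq_of_ins h1 h2 h3 h4⟩
  induction n with
  | zero => simp [Mseq] at h
  | succ n ih =>
    have hnd := nodup_Mseq hdupIns (n := n) (by omega)
    by_cases hlast : w (n + 1) = .ins a
    · exact ⟨n + 1, by omega, le_rfl, hlast, fun k h1 h2 => by omega⟩
    · have hmem : a ∈ Mseq w n ∧ w (n + 1) ≠ .ext a := by
        cases hw : w (n + 1) with
        | ins c =>
          have hne : a ≠ c := fun h => hlast (by rw [hw, h])
          simp only [Mseq, hw, stepM, Multiset.mem_cons, hne, false_or] at h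
          exact ⟨h, by simp⟩
        | ext c =>
          simp only [Mseq, hw, stepM, hnd.mem_erase_iff] at h
          refine ⟨h.2, fun he => h.1 ?_⟩
          injection he with he
          exact he.symm
      obtain ⟨i, h1, h2, h3, h4⟩ := ih (by omega) hmem.1
      refine ⟨i, h1, by omega, h3, fun k hk1 hk2 => ?_⟩
      rcases Nat.lt_or_ge n k with hk | hk
      · obtain rfl : k = n + 1 := by omega
        exact hmem.2
      · exact h4 k hk1 hk

/-- Characterization of priority-queue transcripts without duplicates: a balanced,
duplicate-free word is in `PQ(U)` iff every extraction occurs after the matching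
insertion and no pattern `ins(a) … ext(b) … ext(a)` with `b < a` occurs. -/
theorem inPQ_iff_of_noDup_balanced (U N : ℕ) (hU : 0 < U) (hN : 0 < N)
    (w : ℕ → Letter)
    (halph : ∀ i, 1 ≤ i → i ≤ N → (w i).value ≤ U)
    (hdupIns : ∀ a i j, 1 ≤ i → i ≤ N → 1 ≤ j → j ≤ N →
      w i = .ins a → w j = .ins a → i = j)
    (hdupExt : ∀ a i j, 1 ≤ i → i ≤ N → 1 ≤ j → j ≤ N →
      w i = .ext a → w j = .ext a → i = j)
    (hbal : ∀ a, (∃ i, 1 ≤ i ∧ i ≤ N ∧ w i = .ins a) ↔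
      (∃ j, 1 ≤ j ∧ j ≤ N ∧ w j = .ext a)) :
    InPQ U N w ↔
      ((∀ a i j, 1 ≤ i → i ≤ N → 1 ≤ j → j ≤ N →
          w i = .ins a → w j = .ext a → i < j) ∧
        ¬ ∃ i t j a b, 1 ≤ i ∧ i < t ∧ t < j ∧ j ≤ N ∧ b < a ∧
          w i = .ins a ∧ w t = .ext b ∧ w j = .ext a) := by
  constructor
  · rintro ⟨-, ⟨-, hcol⟩, hmax⟩
    refine ⟨fun a i j hi hiN hj hjN hwi hwj => ?_, ?_⟩
    · obtain ⟨k, h1, h2, h3⟩ := exists_ins_of_mem_Mseq (hcol j hj hjN a hwj)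
      have := hdupIns a i k hi hiN h1 (by omega) hwi h3
      omega
    · rintro ⟨i, t, j, a, b, hi, hit, htj, hjN, hba, hwi, hwt, hwj⟩
      -- The unique `ext a` is at `j > t`, so `a` is still present when `b` is extracted.
      have hmem : a ∈ Mseq w (t - 1) :=
        mem_Mseq_of_ins hi (by omega) hwi fun k h1 h2 hwk => by
          have := hdupExt a k j (by omega) (by omega) (by omega) hjN hwk hwj
          omega
      have := hmax t (by omega) (by omega) b hwt a hmem
      omega
  · rintro ⟨hord, hpat⟩
    refine ⟨halph, ⟨?_, fun i hi hiN a hwi => ?_⟩, fun t ht htN b hwt a ha => ?_⟩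
    · refine Multiset.eq_zero_of_forall_notMem fun a ha => ?_
      obtain ⟨i, h1, h2, h3, h4⟩ := (mem_Mseq_iff hdupIns le_rfl).1 ha
      obtain ⟨j, hj, hjN, hwj⟩ := (hbal a).1 ⟨i, h1, h2, h3⟩
      exact h4 j (hord a i j h1 h2 hj hjN h3 hwj) hjN hwj
    · obtain ⟨k, hk, hkN, hwk⟩ := (hbal a).2 ⟨i, hi, hiN, hwi⟩
      have hki := hord a k i hk hkN hi hiN hwk hwi
      refine mem_Mseq_of_ins hk (by omega) hwk fun l h1 h2 hwl => ?_
      have := hdupExt a l i (by omega) (by omega) hi hiN hwl hwi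
      omega
    · by_contra! hba
      obtain ⟨i, h1, h2, h3, h4⟩ := (mem_Mseq_iff hdupIns (by omega)).1 ha
      obtain ⟨j, hj, hjN, hwj⟩ := (hbal a).1 ⟨i, h1, by omega, h3⟩
      have hij := hord a i j h1 (by omega) hj hjN h3 hwj
      have htj : t ≤ j := by
        by_contra! hlt
        exact h4 j hij (by omega) hwj
      have hne : t ≠ j := by
        rintro rfl
        rw [hwt] at hwj
        injection hwj with hab
        omega
      exact hpat ⟨i, t, j, a, b, h1, by omega, by omega, hjN, hba, h3, hwt, hwj⟩
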